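/- For all real numbers T > 0 and u > 0, (2πT)^{-1/2} · ∫_u^∞ exp(−w²/(2T)) dw = (1/(2π)) · ∫₀^T (s·(T−s))^{-1/2} · exp(−u²/(2s)) ds, where both integrals are Lebesgue integrals. -/

import Mathlib

open MeasureTheory Real

/-! Integrate the kernel `w * exp (-(b * (1 + x ^ 2)) * w ^ 2)`, with `b = 1 / (2T)`, over `x > 0`
and `w > u`. Integrating first in `x` is a Gaussian integral, and leaves a multiple of the tail
`∫_u^∞ exp (-b w²) dw`. Integrating first in `w` is elementary, and leaves
`∫_0^∞ exp (-b u² (1 + x²)) / (1 + x²) dx`, which the substitution `s = T / (1 + x²)` turns into the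
integral against the arcsine weight `(s (T - s)) ^ (-1/2)`. -/

open Set Filter Topology

section GaussianTail

variable {b : ℝ}

lemma integral_Ioi_mul_exp_neg_mul_sq (hb : 0 < b) (u : ℝ) :
    ∫ w in Ioi u, w * exp (-b * w ^ 2) = exp (-b * u ^ 2) / (2 * b) := by
  have hderiv : ∀ w ∈ Ici u,
      HasDerivAt (fun w ↦ -(exp (-b * w ^ 2) / (2 * b))) (w * exp (-b * w ^ 2)) w := by
    intro w _
    refine (((hasDerivAt_pow 2 w).const_mul (-b)).exp.div_const (2 * b)).neg.congr_deriv ?_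
    push_cast
    field_simp
  have hlim : Tendsto (fun w : ℝ ↦ -(exp (-b * w ^ 2) / (2 * b))) atTop (𝓝 0) := by
    have hexp : Tendsto (fun w : ℝ ↦ exp (-b * w ^ 2)) atTop (𝓝 0) :=
      tendsto_exp_atBot.comp
        ((tendsto_pow_atTop two_ne_zero).const_mul_atTop_of_neg (neg_neg_of_pos hb))
    simpa using (hexp.div_const (2 * b)).neg
  rw [integral_Ioi_of_hasDerivAt_of_tendsto' hderiv
    (integrable_mul_exp_neg_mul_sq hb).integrableOn hlim]
  ring

lemma exp_neg_mul_one_add_sq_mul_sq (b x w : ℝ) :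
    exp (-(b * (1 + x ^ 2)) * w ^ 2) = exp (-b * w ^ 2) * exp (-(b * w ^ 2) * x ^ 2) := by
  rw [← exp_add]
  ring_nf

lemma integral_Ioi_abs_mul_exp_neg_mul_one_add_sq (b : ℝ) {w : ℝ} (hw : w ≠ 0) :
    ∫ x in Ioi (0 : ℝ), |w| * exp (-(b * (1 + x ^ 2)) * w ^ 2) =
      √(π / b) / 2 * exp (-b * w ^ 2) := by
  have hsqrt : √(π / (b * w ^ 2)) = √(π / b) / |w| := by
    rw [← div_div, sqrt_div' _ (sq_nonneg w), sqrt_sq_eq_abs]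
  simp only [exp_neg_mul_one_add_sq_mul_sq, integral_const_mul, integral_gaussian_Ioi, hsqrt]
  field_simp

lemma integrable_prod_mul_exp_neg_mul_one_add_sq (hb : 0 < b) :
    Integrable (fun p : ℝ × ℝ ↦ p.2 * exp (-(b * (1 + p.1 ^ 2)) * p.2 ^ 2))
      ((volume.restrict (Ioi 0)).prod volume) := by
  rw [integrable_prod_iff' (by fun_prop)]
  constructor
  · filter_upwards [Measure.ae_ne volume 0] with w hw
    simp only [exp_neg_mul_one_add_sq_mul_sq]
    exact (((integrable_exp_neg_mul_sq (by positivity)).const_mul _).const_mul _).integrableOn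
  · refine ((integrable_exp_neg_mul_sq hb).const_mul (√(π / b) / 2)).congr ?_
    filter_upwards [Measure.ae_ne volume 0] with w hw
    simp only [norm_mul, norm_eq_abs, abs_exp]
    exact (integral_Ioi_abs_mul_exp_neg_mul_one_add_sq b hw).symm

/-- Craig's formula for the Gaussian tail, in the variable `x = cot θ`. -/
lemma integral_Ioi_exp_neg_mul_sq_div_one_add_sq (hb : 0 < b) {u : ℝ} (hu : 0 ≤ u) :
    ∫ x in Ioi (0 : ℝ), exp (-(b * (1 + x ^ 2)) * u ^ 2) / (1 + x ^ 2) =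
      √(π * b) * ∫ w in Ioi u, exp (-b * w ^ 2) := by
  have hsqrt : 2 * b * (√(π / b) / 2) = √(π * b) := by
    rw [show π * b = π / b * b ^ 2 by field_simp, sqrt_mul' _ (sq_nonneg b), sqrt_sq hb.le]
    ring
  calc ∫ x in Ioi (0 : ℝ), exp (-(b * (1 + x ^ 2)) * u ^ 2) / (1 + x ^ 2)
      = ∫ x in Ioi (0 : ℝ), 2 * b * ∫ w in Ioi u, w * exp (-(b * (1 + x ^ 2)) * w ^ 2) := by
        congr 1 with x
        rw [integral_Ioi_mul_exp_neg_mul_sq (by positivity)]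
        field_simp
    _ = 2 * b * ∫ w in Ioi u, ∫ x in Ioi (0 : ℝ), w * exp (-(b * (1 + x ^ 2)) * w ^ 2) := by
        rw [integral_const_mul, integral_integral_swap]
        exact (integrable_prod_mul_exp_neg_mul_one_add_sq hb).mono_measure
          (Measure.prod_mono le_rfl Measure.restrict_le_self)
    _ = 2 * b * ∫ w in Ioi u, √(π / b) / 2 * exp (-b * w ^ 2) := by
        congr 1
        refine setIntegral_congr_fun measurableSet_Ioi fun w (hw : u < w) ↦ ?_
        have hw₀ : 0 < w := hu.trans_lt hw
        simpa only [abs_of_pos hw₀] using integral_Ioi_abs_mul_exp_neg_mul_one_add_sq b hw₀.ne'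
    _ = √(π * b) * ∫ w in Ioi u, exp (-b * w ^ 2) := by
        rw [integral_const_mul, ← mul_assoc, hsqrt]

end GaussianTail

section ArcsineSubstitution

variable {T : ℝ}

lemma bijOn_div_one_add_sq (hT : 0 < T) :
    BijOn (fun x : ℝ ↦ T / (1 + x ^ 2)) (Ioi 0) (Ioo 0 T) := by
  refine ⟨fun x (hx : 0 < x) ↦ ⟨by positivity, ?_⟩, fun x (hx : 0 < x) y (hy : 0 < y) hxy ↦ ?_,
    fun s ⟨hs, hsT⟩ ↦ ?_⟩
  · exact div_lt_self hT (lt_add_of_pos_right 1 (by positivity))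
  · have hsq : x ^ 2 = y ^ 2 := by simpa [div_eq_mul_inv, hT.ne'] using hxy
    exact (sq_eq_sq₀ hx.le hy.le).1 hsq
  · have hpos : 0 < T / s - 1 := sub_pos.2 ((one_lt_div hs).2 hsT)
    refine ⟨√(T / s - 1), sqrt_pos.2 hpos, ?_⟩
    simp only [sq_sqrt hpos.le, add_sub_cancel, div_div_cancel₀ hT.ne']

lemma hasDerivAt_div_one_add_sq (T x : ℝ) :
    HasDerivAt (fun x : ℝ ↦ T / (1 + x ^ 2)) (-(2 * T * x) / (1 + x ^ 2) ^ 2) x := by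
  have hden : HasDerivAt (fun x : ℝ ↦ 1 + x ^ 2) (2 * x) x := by
    simpa using (hasDerivAt_pow 2 x).const_add 1
  refine ((hasDerivAt_const x T).div hden (by positivity)).congr_deriv ?_
  ring

lemma rpow_neg_half_div_one_add_sq (hT : 0 < T) {x : ℝ} (hx : 0 < x) :
    (T / (1 + x ^ 2) * (T - T / (1 + x ^ 2))) ^ (-(1 : ℝ) / 2) = (1 + x ^ 2) / (T * x) := by
  have hsq : T / (1 + x ^ 2) * (T - T / (1 + x ^ 2)) = (T * x / (1 + x ^ 2)) ^ 2 := by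
    field_simp
    ring
  rw [hsq, neg_div, rpow_neg (sq_nonneg _), ← sqrt_eq_rpow, sqrt_sq (by positivity), inv_div]

lemma integral_Ioo_rpow_neg_half_smul {E : Type*} [NormedAddCommGroup E] [NormedSpace ℝ E]
    (hT : 0 < T) (g : ℝ → E) :
    ∫ s in Ioo 0 T, (s * (T - s)) ^ (-(1 : ℝ) / 2) • g s =
      ∫ x in Ioi (0 : ℝ), (2 / (1 + x ^ 2)) • g (T / (1 + x ^ 2)) := by
  rw [← (bijOn_div_one_add_sq hT).image_eq,
    integral_image_eq_integral_abs_deriv_smul measurableSet_Ioi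
      (fun x _ ↦ (hasDerivAt_div_one_add_sq T x).hasDerivWithinAt)
      (bijOn_div_one_add_sq hT).injOn]
  refine setIntegral_congr_fun measurableSet_Ioi fun x (hx : 0 < x) ↦ ?_
  have habs : |-(2 * T * x) / (1 + x ^ 2) ^ 2| = 2 * T * x / (1 + x ^ 2) ^ 2 := by
    rw [neg_div, abs_neg, abs_of_pos (by positivity)]
  simp only [smul_smul, rpow_neg_half_div_one_add_sq hT hx, habs]
  congr 1
  field_simp

lemma integral_Ioo_rpow_neg_half_mul_exp_neg_sq_div (hT : 0 < T) (u : ℝ) :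
    ∫ s in Ioo 0 T, (s * (T - s)) ^ (-(1 : ℝ) / 2) * exp (-u ^ 2 / (2 * s)) =
      2 * ∫ x in Ioi (0 : ℝ), exp (-((2 * T)⁻¹ * (1 + x ^ 2)) * u ^ 2) / (1 + x ^ 2) := by
  have hexponent : ∀ x : ℝ,
      -u ^ 2 / (2 * (T / (1 + x ^ 2))) = -((2 * T)⁻¹ * (1 + x ^ 2)) * u ^ 2 := by
    intro x
    field_simp
  have hsubst := integral_Ioo_rpow_neg_half_smul hT fun s ↦ exp (-u ^ 2 / (2 * s))
  simp only [smul_eq_mul, hexponent] at hsubst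
  rw [hsubst, ← integral_const_mul]
  congr 1 with x
  ring

end ArcsineSubstitution

/-- Calculus identity combining the finite-horizon supremum formula for Brownian motion with the
reflection principle:
`(2πT)^(-1/2) ∫_u^∞ exp(−w²/(2T)) dw = (1/(2π)) ∫₀^T (s(T−s))^(-1/2) exp(−u²/(2s)) ds`. -/
theorem brownian_finite_horizon_integral_identity (T u : ℝ) (hT : 0 < T) (hu : 0 < u) :
    (2 * Real.pi * T) ^ (-(1 : ℝ) / 2) *
        ∫ w in Set.Ioi u, Real.exp (-w ^ 2 / (2 * T)) =
      1 / (2 * Real.pi) *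
        ∫ s in Set.Ioo (0 : ℝ) T, (s * (T - s)) ^ (-(1 : ℝ) / 2) *
          Real.exp (-u ^ 2 / (2 * s)) := by
  have hconst : (2 * π * T) ^ (-(1 : ℝ) / 2) = 1 / π * √(π * (2 * T)⁻¹) := by
    rw [show π * (2 * T)⁻¹ = (2 * π * T)⁻¹ * π ^ 2 by field_simp, sqrt_mul' _ (sq_nonneg π),
      sqrt_sq pi_nonneg, sqrt_inv, neg_div, rpow_neg (by positivity), ← sqrt_eq_rpow]
    field_simp
  have hexponent : ∀ w : ℝ, -w ^ 2 / (2 * T) = -(2 * T)⁻¹ * w ^ 2 := fun w ↦ by ring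
  have hcraig := integral_Ioi_exp_neg_mul_sq_div_one_add_sq (b := (2 * T)⁻¹) (by positivity) hu.le
  rw [integral_Ioo_rpow_neg_half_mul_exp_neg_sq_div hT, hcraig, hconst]
  simp only [hexponent]
  ring
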